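/- Let M be a nonzero finitely generated A-module with cd(M) = r. Then M is r-pure if and only if Ext^s_A(Ext^s_A(M, A), A) = 0 for every integer s with 0 ≤ s ≤ n and s ≠ r. -/

import Mathlib

/-!
Write `E^i(N) = Ext^i(N, A)`. Everything is read off from the supports of these modules.

If `x ∈ p` is `N`-regular, then multiplication by `x` embeds `E^i(N)/x` into `E^{i+1}(N/xN)`, so by
Nakayama's lemma a prime `p` in the support of `E^i(N)` is in the support of `E^{i+1}(N/xN)`
(`mem_support_ExtA_quotSMulTop`). Combined with the dévissage of `N/xN` into modules `A/Q`, this lets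
one climb from `A/q` to `A/p` for primes `q ⊆ p`, one `Ext` degree at a time. In a polynomial ring
every maximal ideal `m` is generated by a regular sequence of length `n`, so `E^i(A/m) = 0` for
`i ≠ n`. Climbing then shows that each prime `p` is in the support of `E^i(A/p)` for exactly one `i`,
called `extDeg p`; that `extDeg` is strictly monotone with `dim A/p = n - extDeg p`; and that for
`p` in the support of `E^i(N)` one has `i ≤ extDeg p` (`le_extDeg_of_mem_support`), while some
`q` in the support of `N` has `extDeg q ≤ i` (`exists_extDeg_le_of_mem_support`). Moreover an
associated prime `p` of `N` lies in the support of `E^s(N)` for `s = extDeg p`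
(`mem_support_of_isAssociatedPrime`).

A module `M` of codimension `r` is `r`-pure exactly when `extDeg p = r` for all its associated primes.
If it is pure and `q` is in the support of `E^s(M)` with `extDeg q = s > r`, then `q` contains an
`M`-regular element `x` by prime avoidance, and `q` lies in the support of `E^{s+1}(M/xM)`, which is
impossible since `s + 1 > extDeg q`. Conversely, an associated prime `p` of `M` with `extDeg p = s` is
a minimal prime of the support of `E^s(M)`, hence associated to `E^s(M)`, so that `E^s(E^s(M)) ≠ 0`.
-/

open CategoryTheory

/-- `Ext^i_A(M, A)` as a module over `A`, defined via the derived functor `Ext` of Mathlib. -/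
noncomputable def extModule (A : Type) [CommRing A] (M : Type) [AddCommGroup M] [Module A M]
    (i : ℕ) : ModuleCat A :=
  ((Ext A (ModuleCat A) i).obj (Opposite.op (ModuleCat.of A M))).obj (ModuleCat.of A A)

/-- An `A = k[x_1, …, x_n]`-module `M` is `r`-pure if every nonzero element `m ∈ M` generates a
cyclic submodule `A·m` of codimension exactly `r`, i.e. `dim (A / ann_A(A·m)) = n - r`. -/
def IsPureMod (k : Type) [Field k] (n : ℕ) (r : ℕ) (M : Type) [AddCommGroup M]
    [Module (MvPolynomial (Fin n) k) M] : Prop :=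
  ∀ m : M, m ≠ 0 →
    ringKrullDim (MvPolynomial (Fin n) k ⧸
        (Submodule.span (MvPolynomial (Fin n) k) {m}).annihilator)
      = ((n - r : ℕ) : WithBot (WithTop ℕ))

/-! ### Comparison of the two constructions of Ext -/

section comparison
variable {A : Type} [CommRing A] {X : ModuleCat.{0} A} (P : ProjectiveResolution X)
  (Y : ModuleCat.{0} A) (i : ℕ)

lemma extMk_smul {m : ℕ} (hm : i + 1 = m) (a : A) (f : P.complex.X i ⟶ Y)
    (hf : P.complex.d m i ≫ f = 0) :
    P.extMk (a • f) m hm (by simp [hf]) = a • P.extMk f m hm hf := by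
  rw [Abelian.Ext.smul_eq_comp_mk₀, P.extMk_comp_mk₀]
  simp

/-- Uniform version of `ProjectiveResolution.extMk_eq_zero_iff`, which covers only positive degrees:
in degree `0` the coboundaries vanish. -/
lemma extMk_eq_zero_iff_prev {m : ℕ} (hm : i + 1 = m) (f : P.complex.X i ⟶ Y)
    (hf : P.complex.d m i ≫ f = 0) :
    P.extMk f m hm hf = 0 ↔
      ∃ g : P.complex.X ((ComplexShape.up ℕ).prev i) ⟶ Y,
        P.complex.d i ((ComplexShape.up ℕ).prev i) ≫ g = f := by
  cases i with
  | succ j =>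
    rw [P.extMk_eq_zero_iff f m hm hf ((ComplexShape.up ℕ).prev (j + 1)) (by simp)]
  | zero =>
    have h0 : P.complex.d 0 ((ComplexShape.up ℕ).prev 0) = 0 := by
      apply P.complex.shape; simp
    simp only [h0, Limits.zero_comp, exists_const]
    simp only [← P.extEquivCohomologyClass.apply_eq_iff_eq,
      ProjectiveResolution.extEquivCohomologyClass_extMk,
      ProjectiveResolution.extEquivCohomologyClass_zero,
      CochainComplex.HomComplex.CohomologyClass.mk_eq_zero_iff]
    rw [CochainComplex.HomComplex.Cocycle.toSingleMk_mem_coboundaries_iff _ _ _ _ _ 1 (by simp)]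
    have hz : Limits.IsZero (P.cochainComplex.X 1) := by
      exact CochainComplex.isZero_of_isStrictlyLE _ 0 _
    constructor
    · rintro ⟨g, hg⟩
      rw [hz.eq_of_src g 0] at hg
      rw [← cancel_epi (P.cochainComplexXIso (-(0 : ℕ)) 0 rfl).hom]
      simpa using hg
    · rintro rfl
      exact ⟨0, by simp⟩

/-- The class in `Ext^i(X, Y)` of an `i`-cocycle of `Hom(P, Y)`, for a projective resolution `P`
of `X`. -/
noncomputable def cocyclesToExt :
    LinearMap.ker ((P.complex.linearYonedaObj A Y).sc i).g.hom →ₗ[A] Abelian.Ext X Y i where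
  toFun f := P.extMk (f.1 : P.complex.X i ⟶ Y) ((ComplexShape.up ℕ).next i) (by simp) f.2
  map_add' f g := (P.add_extMk _ _ _ _ _ _).symm
  map_smul' a f := extMk_smul P Y i _ a _ _

lemma ker_cocyclesToExt :
    LinearMap.range ((P.complex.linearYonedaObj A Y).sc i).moduleCatToCycles =
      LinearMap.ker (cocyclesToExt P Y i) := by
  ext f
  rw [LinearMap.mem_ker]
  refine Iff.trans ?_ (extMk_eq_zero_iff_prev P Y i (by simp) f.1 f.2).symm
  constructor
  · rintro ⟨g, rfl⟩
    exact ⟨g, rfl⟩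
  · rintro ⟨g, hg⟩
    exact ⟨g, Subtype.ext hg⟩

/-- The derived functor `Ext` agrees with `Abelian.Ext`: both are the cohomology of `Hom(P, Y)`. -/
noncomputable def extComparison :
    (((_root_.Ext A (ModuleCat A) i).obj (Opposite.op X)).obj Y) ≃ₗ[A] Abelian.Ext X Y i :=
  (P.isoExt i Y ≪≫
    ((P.complex.linearYonedaObj A Y).sc i).moduleCatHomologyIso).toLinearEquiv ≪≫ₗ
    Submodule.quotEquivOfEq _ _ (ker_cocyclesToExt P Y i) ≪≫ₗ
    (cocyclesToExt P Y i).quotKerEquivOfSurjective (by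
      intro x
      obtain ⟨f, hf, rfl⟩ := P.extMk_surjective x ((ComplexShape.up ℕ).next i) (by simp)
      exact ⟨⟨f, hf⟩, rfl⟩)
end comparison

/-- `extModule A M i` computed by `Abelian.Ext`. -/
noncomputable def extModuleEquiv (A : Type) [CommRing A] (M : Type) [AddCommGroup M] [Module A M]
    (i : ℕ) : extModule A M i ≃ₗ[A] Abelian.Ext (ModuleCat.of A M) (ModuleCat.of A A) i :=
  extComparison (ProjectiveResolution.of (ModuleCat.of A M)) (ModuleCat.of A A) i

/-! ### Long exact sequences for Ext into the ring -/

section exactness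
variable {A : Type} [CommRing A]

lemma support_subset_union_of_exact {M₁ M₂ M₃ : Type*} [AddCommGroup M₁] [AddCommGroup M₂]
    [AddCommGroup M₃] [Module A M₁] [Module A M₂] [Module A M₃] {f : M₁ →ₗ[A] M₂} {g : M₂ →ₗ[A] M₃}
    (h : Function.Exact f g) :
    Module.support A M₂ ⊆ Module.support A M₁ ∪ Module.support A M₃ := by
  intro p hp
  by_contra hc
  simp only [Set.mem_union, not_or] at hc
  rw [Module.notMem_support_iff', Module.notMem_support_iff'] at hc
  rw [Module.mem_support_iff'] at hp
  obtain ⟨m, hm⟩ := hp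
  obtain ⟨r, hr, hrm⟩ := hc.2 (g m)
  obtain ⟨y, hy⟩ := (h (r • m)).1 (by simpa using hrm)
  obtain ⟨s, hs, hsy⟩ := hc.1 y
  refine hm (s * r) (fun hsr ↦ (p.2.mem_or_mem hsr).elim hs hr) ?_
  rw [mul_smul, ← hy, ← map_smul, hsy, map_zero]

/-- `Ext^i_A(N, A)` in the formulation `CategoryTheory.Abelian.Ext`, which comes with long exact
sequences. -/
abbrev ExtA (A : Type) [CommRing A] (N : Type) [AddCommGroup N] [Module A N] (i : ℕ) : Type :=
  Abelian.Ext (ModuleCat.of A N) (ModuleCat.of A A) i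

variable {N₁ N₂ N₃ : Type} [AddCommGroup N₁] [AddCommGroup N₂] [AddCommGroup N₃]
  [Module A N₁] [Module A N₂] [Module A N₃]

/-- The map `Ext^i(N₂, A) → Ext^i(N₁, A)` induced by `f : N₁ → N₂`. -/
noncomputable def ExtA.map (f : N₁ →ₗ[A] N₂) (i : ℕ) : ExtA A N₂ i →ₗ[A] ExtA A N₁ i :=
  (Abelian.Ext.mk₀ (ModuleCat.ofHom f)).precompOfLinear A (ModuleCat.of A A) (zero_add i)

lemma ExtA.map_smul_id (x : A) (i : ℕ) (e : ExtA A N₁ i) :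
    ExtA.map (x • LinearMap.id : N₁ →ₗ[A] N₁) i e = x • e := by
  have : ModuleCat.ofHom (x • LinearMap.id : N₁ →ₗ[A] N₁) = x • 𝟙 (ModuleCat.of A N₁) := rfl
  simp [ExtA.map, Abelian.Ext.precompOfLinear, this, Abelian.Ext.mk₀_smul]

lemma ExtA.map_comp {f : N₁ →ₗ[A] N₂} {g : N₂ →ₗ[A] N₃} (i : ℕ) (e : ExtA A N₃ i) :
    ExtA.map (g ∘ₗ f) i e = ExtA.map f i (ExtA.map g i e) := by
  simp [ExtA.map, Abelian.Ext.precompOfLinear]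

lemma ExtA.map_id (i : ℕ) (e : ExtA A N₁ i) : ExtA.map LinearMap.id i e = e := by
  simp [ExtA.map, Abelian.Ext.precompOfLinear]

lemma ExtA.map_zero (i : ℕ) (e : ExtA A N₂ i) : ExtA.map (0 : N₁ →ₗ[A] N₂) i e = 0 := by
  rw [ExtA.map, ModuleCat.ofHom_zero]
  simp [Abelian.Ext.precompOfLinear]

/-- The long exact sequence of `Ext^•(-, A)` for a short exact sequence `0 → N₁ → N₂ → N₃ → 0`, at
`Ext^i(N₂)`, `Ext^i(N₁)` and `Ext^{i+1}(N₃)`. -/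
lemma ExtA.exists_exact {f : N₁ →ₗ[A] N₂} {g : N₂ →ₗ[A] N₃} (hf : Function.Injective f)
    (hg : Function.Surjective g) (h : Function.Exact f g) (i : ℕ) :
    Function.Exact (ExtA.map g i) (ExtA.map f i) ∧
    ∃ δ : ExtA A N₁ i →ₗ[A] ExtA A N₃ (i + 1),
      Function.Exact (ExtA.map f i) δ ∧ Function.Exact δ (ExtA.map g (i + 1)) := by
  let S : ShortComplex (ModuleCat.{0} A) := ShortComplex.moduleCatMk f g h.linearMap_comp_eq_zero
  have hS : S.ShortExact :=
    { exact := ModuleCat.shortComplex_exact _ h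
      mono_f := (ModuleCat.mono_iff_injective _).2 hf
      epi_g := (ModuleCat.epi_iff_surjective _).2 hg }
  have key₁ (x : Abelian.Ext S.X₂ (ModuleCat.of A A) i) :
      hS.extClass.comp ((Abelian.Ext.mk₀ S.f).comp x (zero_add i)) (add_comm 1 i) = 0 := by
    rw [ShortComplex.ShortExact.extClass_comp_assoc]
  have key₂ (x : Abelian.Ext S.X₁ (ModuleCat.of A A) i) :
      (Abelian.Ext.mk₀ S.g).comp (hS.extClass.comp x (add_comm 1 i)) (zero_add (i + 1)) = 0 := by
    rw [ShortComplex.ShortExact.comp_extClass_assoc]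
  refine ⟨fun y ↦ ⟨fun hy ↦ ?_, ?_⟩, hS.extClass.precompOfLinear A (ModuleCat.of A A)
    (add_comm 1 i), fun y ↦ ⟨fun hy ↦ ?_, ?_⟩, fun y ↦ ⟨fun hy ↦ ?_, ?_⟩⟩
  · exact Abelian.Ext.contravariant_sequence_exact₂ hS _ y hy
  · rintro ⟨x, rfl⟩
    rw [← ExtA.map_comp, h.linearMap_comp_eq_zero, ExtA.map_zero]
  · exact Abelian.Ext.contravariant_sequence_exact₁ hS _ y (add_comm 1 i) hy
  · rintro ⟨x, rfl⟩
    exact key₁ x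
  · exact Abelian.Ext.contravariant_sequence_exact₃ hS _ y hy (add_comm 1 i)
  · rintro ⟨x, rfl⟩
    exact key₂ x

/-- `Ext^i(-, A)` applied to a linear equivalence. -/
noncomputable def ExtA.congr (e : N₁ ≃ₗ[A] N₂) (i : ℕ) : ExtA A N₂ i ≃ₗ[A] ExtA A N₁ i :=
  LinearEquiv.ofLinearMap (ExtA.map e.toLinearMap i) (ExtA.map e.symm.toLinearMap i)
    (by ext x; simp [← ExtA.map_comp, ExtA.map_id]) (by ext x; simp [← ExtA.map_comp, ExtA.map_id])

/-- An element killing `N₁` also kills `Ext^i(N₁, A)`. -/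
lemma support_ExtA_subset [Module.Finite A N₁] (i : ℕ) :
    Module.support A (ExtA A N₁ i) ⊆ Module.support A N₁ := by
  intro p hp
  rw [Module.support_eq_zeroLocus]
  refine le_trans ?_ (Module.annihilator_le_of_mem_support hp)
  intro a ha
  rw [Module.mem_annihilator] at ha ⊢
  intro e
  rw [← ExtA.map_smul_id]
  have : (a • LinearMap.id : N₁ →ₗ[A] N₁) = 0 := by ext x; simpa using ha x
  rw [this, ExtA.map_zero]

end exactness

/-! ### Supports of Ext modules and climbing along primes -/

section supports
open scoped Pointwise
variable {A : Type} [CommRing A] [IsNoetherianRing A]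

instance : WellFoundedGT (PrimeSpectrum A) :=
  StrictMono.wellFoundedGT (f := PrimeSpectrum.asIdeal) fun _ _ h ↦ h

/-- Dévissage: the support of `Ext^i(N, A)` is covered by those of `Ext^i(A/q, A)`, where `q` runs
through primes in the support of `N`. -/
lemma exists_prime_of_mem_support_ExtA (N : Type) [AddCommGroup N] [Module A N]
    [hN : Module.Finite A N] {p : PrimeSpectrum A} {i : ℕ}
    (hp : p ∈ Module.support A (ExtA A N i)) :
    ∃ q ∈ Module.support A N, q ≤ p ∧ p ∈ Module.support A (ExtA A (A ⧸ q.asIdeal) i) := by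
  induction hN using IsNoetherianRing.induction_on_isQuotientEquivQuotientPrime A with
  | subsingleton N =>
    have := support_ExtA_subset (A := A) (N₁ := N) i hp
    simp [Module.support_eq_empty] at this
  | quotient N q e =>
    have hq : Module.support A N = PrimeSpectrum.zeroLocus q.asIdeal := by
      rw [e.support_eq, Module.support_eq_zeroLocus, Ideal.annihilator_quotient]
    refine ⟨q, ?_, ?_, ?_⟩
    · rw [hq]; simp [PrimeSpectrum.mem_zeroLocus]
    · have := support_ExtA_subset i hp
      rw [hq] at this
      simpa [PrimeSpectrum.mem_zeroLocus] using this
    · rwa [(ExtA.congr e i).support_eq]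
  | exact N₁ N₂ N₃ f g hf hg hfg h₁ h₃ =>
    have hs := Module.support_of_exact hfg hf hg
    rcases support_subset_union_of_exact (ExtA.exists_exact hf hg hfg i).1 hp with h | h
    · obtain ⟨q, hq, h⟩ := h₃ h
      exact ⟨q, hs ▸ Or.inr hq, h⟩
    · obtain ⟨q, hq, h⟩ := h₁ h
      exact ⟨q, hs ▸ Or.inl hq, h⟩

/-- For an `N`-regular element `x ∈ p`, multiplication by `x` embeds `Ext^i(N, A) / x` into
`Ext^{i+1}(N/xN, A)`, so Nakayama's lemma moves `p` from one support to the next. -/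
lemma mem_support_ExtA_quotSMulTop (N : Type) [AddCommGroup N] [Module A N]
    [Module.Finite A N] {p : PrimeSpectrum A} {x : A} (hx : IsSMulRegular N x)
    (hxp : x ∈ p.asIdeal) {i : ℕ} (hp : p ∈ Module.support A (ExtA A N i)) :
    p ∈ Module.support A (ExtA A (QuotSMulTop x N) (i + 1)) := by
  have hf : Function.Injective (x • LinearMap.id : N →ₗ[A] N) := hx
  have hfg : Function.Exact (x • LinearMap.id : N →ₗ[A] N)
      (Submodule.mkQ (x • (⊤ : Submodule A N))) := by
    rw [LinearMap.exact_iff, Submodule.ker_mkQ]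
    ext y
    simp [Submodule.mem_smul_pointwise_iff_exists]
  obtain ⟨-, δ, h1, -⟩ := ExtA.exists_exact hf (Submodule.mkQ_surjective _) hfg i
  have hq : p ∈ Module.support A (QuotSMulTop x (ExtA A N i)) := by
    rw [Module.support_quotSMulTop]
    exact ⟨hp, by simpa [PrimeSpectrum.mem_zeroLocus] using hxp⟩
  have hker : x • (⊤ : Submodule A (ExtA A N i)) = LinearMap.ker δ := by
    rw [LinearMap.exact_iff.1 h1]
    ext y
    simp only [Submodule.mem_smul_pointwise_iff_exists, LinearMap.mem_range, ExtA.map_smul_id,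
      Submodule.mem_top, true_and]
  refine Module.support_subset_of_injective ((x • (⊤ : Submodule A (ExtA A N i))).liftQ δ hker.le)
    ?_ hq
  rw [← LinearMap.ker_eq_bot]
  exact Submodule.ker_liftQ_eq_bot _ _ _ hker.ge

/-- One step of the climb from `q` towards `p`: an `x ∈ p` outside `q` is regular
on `A/q`, so `p` supports `Ext^{i+1}` of `A/(q, x)`, hence of `A/Q` for some prime `Q` containing
`q` and `x`. -/
lemma exists_prime_succ {q p : PrimeSpectrum A} {i : ℕ} {x : A}
    (hxq : x ∉ q.asIdeal) (hxp : x ∈ p.asIdeal)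
    (hp : p ∈ Module.support A (ExtA A (A ⧸ q.asIdeal) i)) :
    ∃ q' : PrimeSpectrum A, q ≤ q' ∧ q' ≤ p ∧ x ∈ q'.asIdeal ∧
      p ∈ Module.support A (ExtA A (A ⧸ q'.asIdeal) (i + 1)) := by
  have hx : IsSMulRegular (A ⧸ q.asIdeal) x := by
    rw [isSMulRegular_iff_right_eq_zero_of_smul]
    intro y hy
    obtain ⟨y, rfl⟩ := Ideal.Quotient.mk_surjective y
    rw [Algebra.smul_def, Ideal.Quotient.algebraMap_eq, ← map_mul,
      Ideal.Quotient.eq_zero_iff_mem] at hy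
    exact Ideal.Quotient.eq_zero_iff_mem.2 ((q.2.mem_or_mem hy).resolve_left hxq)
  obtain ⟨q', hq', h1, h2⟩ := exists_prime_of_mem_support_ExtA _
    (mem_support_ExtA_quotSMulTop _ hx hxp hp)
  rw [Module.support_quotSMulTop, Module.support_eq_zeroLocus, Ideal.annihilator_quotient] at hq'
  exact ⟨q', hq'.1, h1, by simpa [PrimeSpectrum.mem_zeroLocus] using hq'.2, h2⟩

/-- Every prime `p` supports some `Ext^i(A/p, A)`. -/
lemma exists_mem_support_ExtA (p : PrimeSpectrum A) :
    ∃ i, p ∈ Module.support A (ExtA A (A ⧸ p.asIdeal) i) := by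
  by_contra! hc
  -- otherwise climbing from any `q ≤ p` never ends, so `p` supports no `Ext^i(A/q, A)` at all
  have key : ∀ q : PrimeSpectrum A, q ≤ p → ∀ i,
      p ∉ Module.support A (ExtA A (A ⧸ q.asIdeal) i) := by
    intro q
    induction q using WellFoundedGT.induction with
    | ind q ih =>
    intro hq i hi
    rcases hq.eq_or_lt with rfl | hlt
    · exact hc i hi
    · obtain ⟨x, hxp, hxq⟩ := SetLike.exists_of_lt (show q.asIdeal < p.asIdeal from hlt)
      obtain ⟨q', h1, h2, h3, h4⟩ := exists_prime_succ hxq hxp hi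
      exact ih q' (lt_of_le_of_ne h1 (by rintro rfl; exact hxq h3)) h2 _ h4
  have h0 : p ∈ Module.support A (ExtA A A 0) := by
    let e : ExtA A A 0 ≃ₗ[A] A := Abelian.Ext.linearEquiv₀.trans
      ((ModuleCat.homLinearEquiv (S := A)).trans (LinearMap.ringLmapEquivSelf A A A))
    rw [e.support_eq, Module.support_of_algebra]
    change RingHom.ker (RingHom.id A) ≤ p.asIdeal
    rw [(RingHom.injective_iff_ker_eq_bot _).1 Function.injective_id]
    exact bot_le
  obtain ⟨q, -, h1, h2⟩ := exists_prime_of_mem_support_ExtA A h0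
  exact key q h1 0 h2

/-- If `q` is not maximal, choose `x ∉ q` in a maximal ideal containing `q` and let `p` be a minimal
prime over `(q, x)`: the climb from `q` towards `p` then arrives at `p` in a single step. -/
lemma exists_gt_of_mem_support_ExtA {q : PrimeSpectrum A} (hq : ¬ q.asIdeal.IsMaximal) :
    ∃ p : PrimeSpectrum A, q < p ∧ ∀ i, q ∈ Module.support A (ExtA A (A ⧸ q.asIdeal) i) →
      p ∈ Module.support A (ExtA A (A ⧸ p.asIdeal) (i + 1)) := by
  obtain ⟨m, hm, hqm⟩ := Ideal.exists_le_maximal q.asIdeal q.2.ne_top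
  obtain ⟨x, hxm, hxq⟩ := SetLike.exists_of_lt (lt_of_le_of_ne hqm (by rintro rfl; exact hq hm))
  obtain ⟨P, hP, hPm⟩ := Ideal.exists_minimalPrimes_le (I := q.asIdeal ⊔ Ideal.span {x}) (J := m)
    (sup_le hqm (by simpa [Ideal.span_le] using hxm))
  have hqP : q ≤ ⟨P, hP.1.1⟩ := le_sup_left.trans hP.1.2
  have hxP : x ∈ P := (le_sup_right.trans hP.1.2) (Ideal.mem_span_singleton_self x)
  refine ⟨⟨P, hP.1.1⟩, lt_of_le_of_ne hqP (by intro h; rw [h] at hxq; exact hxq hxP), fun i hi ↦ ?_⟩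
  obtain ⟨q', h1, h2, h3, h4⟩ := exists_prime_succ hxq hxP (Module.mem_support_mono hqP hi)
  have : q' = ⟨P, hP.1.1⟩ := le_antisymm h2
    (hP.2 ⟨q'.2, sup_le h1 (by simpa [Ideal.span_le] using h3)⟩ h2)
  rwa [this] at h4

end supports

/-! ### The degree of a prime -/

section grade
variable {A : Type} [CommRing A] [IsNoetherianRing A]

/-- A degree `i` in which `p` supports `Ext^i(A/p, A)`. For rings satisfying `ResidualExt` below this
degree is unique (`mem_support_iff`); it plays the role of the codimension of `A/p`. -/
noncomputable def extDeg (p : PrimeSpectrum A) : ℕ := (exists_mem_support_ExtA p).choose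

lemma mem_support_extDeg (p : PrimeSpectrum A) :
    p ∈ Module.support A (ExtA A (A ⧸ p.asIdeal) (extDeg p)) :=
  (exists_mem_support_ExtA p).choose_spec

/-- The rings to which the argument applies: for every maximal ideal `m`, the only possibly nonzero
`Ext^i(A/m, A)` is the one with `i = n`. -/
def ResidualExt (A : Type) [CommRing A] (n : ℕ) : Prop :=
  ∀ m : Ideal A, m.IsMaximal → ∀ i, i ≠ n → Subsingleton (ExtA A (A ⧸ m) i)

variable {n : ℕ} (H : ResidualExt A n)
include H

/-- Degrees supported at `p` shift by one when passing to a suitable larger prime, so uniqueness at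
maximal ideals propagates downwards. -/
lemma mem_support_iff {p : PrimeSpectrum A} {i : ℕ} :
    p ∈ Module.support A (ExtA A (A ⧸ p.asIdeal) i) ↔ i = extDeg p := by
  refine ⟨fun hi ↦ ?_, by rintro rfl; exact mem_support_extDeg p⟩
  induction p using WellFoundedGT.induction generalizing i with
  | ind p ih =>
  by_cases hm : p.asIdeal.IsMaximal
  · have key : ∀ j, p ∈ Module.support A (ExtA A (A ⧸ p.asIdeal) j) → j = n := by
      intro j hj
      by_contra hne
      have := H _ hm j hne
      simp [Module.support_eq_empty] at hj
    rw [key i hi, key _ (mem_support_extDeg p)]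
  · obtain ⟨q, hpq, hq⟩ := exists_gt_of_mem_support_ExtA hm
    have h1 := ih q hpq (hq i hi)
    have h2 := ih q hpq (hq _ (mem_support_extDeg p))
    lia

lemma extDeg_of_isMaximal {p : PrimeSpectrum A} (hp : p.asIdeal.IsMaximal) : extDeg p = n := by
  by_contra hne
  have := H _ hp _ hne
  have hj := mem_support_extDeg p
  simp [Module.support_eq_empty] at hj

lemma exists_gt_extDeg {q : PrimeSpectrum A} (hq : ¬ q.asIdeal.IsMaximal) :
    ∃ p : PrimeSpectrum A, q < p ∧ extDeg p = extDeg q + 1 := by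
  obtain ⟨p, hqp, hp⟩ := exists_gt_of_mem_support_ExtA hq
  exact ⟨p, hqp, ((mem_support_iff H).1 (hp _ (mem_support_extDeg q))).symm⟩

/-- Climbing from `q` to `p` raises the `Ext` degree by one at each step and ends in `extDeg p`. -/
lemma climb {q p : PrimeSpectrum A} (hqp : q ≤ p) {i : ℕ}
    (hp : p ∈ Module.support A (ExtA A (A ⧸ q.asIdeal) i)) :
    i ≤ extDeg p ∧ (q ≠ p → i < extDeg p) := by
  induction q using WellFoundedGT.induction generalizing i with
  | ind q ih =>
  rcases hqp.eq_or_lt with rfl | hlt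
  · exact ⟨((mem_support_iff H).1 hp).le, fun h ↦ (h rfl).elim⟩
  · obtain ⟨x, hxp, hxq⟩ := SetLike.exists_of_lt (show q.asIdeal < p.asIdeal from hlt)
    obtain ⟨q', h1, h2, h3, h4⟩ := exists_prime_succ hxq hxp hp
    have := (ih q' (lt_of_le_of_ne h1 (by rintro rfl; exact hxq h3)) h2 h4).1
    exact ⟨by lia, fun _ ↦ by lia⟩

lemma extDeg_strictMono : StrictMono (extDeg : PrimeSpectrum A → ℕ) := fun q _ hqp ↦
  (climb H hqp.le (Module.mem_support_mono hqp.le (mem_support_extDeg q))).2 hqp.ne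

/-- `Ext^i(A/q, A)` vanishes below the degree `extDeg q`. -/
lemma extDeg_le {q p : PrimeSpectrum A} (hqp : q ≤ p) {i : ℕ}
    (hp : p ∈ Module.support A (ExtA A (A ⧸ q.asIdeal) i)) : extDeg q ≤ i := by
  induction q using WellFoundedGT.induction generalizing i with
  | ind q ih =>
  rcases hqp.eq_or_lt with rfl | hlt
  · exact ((mem_support_iff H).1 hp).ge
  · obtain ⟨x, hxp, hxq⟩ := SetLike.exists_of_lt (show q.asIdeal < p.asIdeal from hlt)
    obtain ⟨q', h1, h2, h3, h4⟩ := exists_prime_succ hxq hxp hp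
    have hlt' : q < q' := lt_of_le_of_ne h1 (by rintro rfl; exact hxq h3)
    have := ih q' hlt' h2 h4
    have := extDeg_strictMono H hlt'
    lia

section
variable {N : Type} [AddCommGroup N] [Module A N] [Module.Finite A N] {p : PrimeSpectrum A} {i : ℕ}

lemma le_extDeg_of_mem_support (hp : p ∈ Module.support A (ExtA A N i)) : i ≤ extDeg p := by
  obtain ⟨q, -, h1, h2⟩ := exists_prime_of_mem_support_ExtA N hp
  exact (climb H h1 h2).1

lemma exists_extDeg_le_of_mem_support (hp : p ∈ Module.support A (ExtA A N i)) :
    ∃ q ∈ Module.support A N, extDeg q ≤ i := by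
  obtain ⟨q, h, h1, h2⟩ := exists_prime_of_mem_support_ExtA N hp
  exact ⟨q, h, extDeg_le H h1 h2⟩

/-- Since `p` supports no `Ext^{s+1}` of a finite module for `s = extDeg p`, the embedding
`A/p ⊆ N` given by an associated prime induces a surjection on `Ext^s` near `p`. -/
lemma mem_support_of_isAssociatedPrime (hp : p.asIdeal ∈ associatedPrimes A N) :
    p ∈ Module.support A (ExtA A N (extDeg p)) := by
  obtain ⟨-, f, hf⟩ := (isAssociatedPrime_iff_exists_injective_linearMap _ _).1 hp
  obtain ⟨-, δ, h, -⟩ := ExtA.exists_exact hf (Submodule.mkQ_surjective _)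
    (LinearMap.exact_map_mkQ_range f) (extDeg p)
  refine (support_subset_union_of_exact h (mem_support_extDeg p)).resolve_right fun h ↦ ?_
  have := le_extDeg_of_mem_support H h
  lia
end

lemma extDeg_le_n (p : PrimeSpectrum A) : extDeg p ≤ n := by
  obtain ⟨m, hm, hpm⟩ := Ideal.exists_le_maximal p.asIdeal p.2.ne_top
  rw [← extDeg_of_isMaximal H (p := ⟨m, hm.isPrime⟩) hm]
  exact (extDeg_strictMono H).monotone hpm

/-- Some chain of primes above `p` raises `extDeg` by one at each step until it reaches `n` at a maximal
ideal; no chain is longer. -/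
lemma coheight_eq (p : PrimeSpectrum A) : Order.coheight p = ((n - extDeg p : ℕ) : ℕ∞) := by
  induction p using WellFoundedGT.induction with
  | ind p ih =>
  apply le_antisymm
  · rw [Order.coheight_eq_iSup_gt_coheight]
    refine iSup₂_le fun q hq ↦ ?_
    rw [ih q hq]
    have h1 := extDeg_strictMono H hq
    have h2 := extDeg_le_n H q
    norm_cast
    lia
  · by_cases hm : p.asIdeal.IsMaximal
    · simp [extDeg_of_isMaximal H hm]
    · obtain ⟨q, hpq, hq⟩ := exists_gt_extDeg H hm
      refine le_trans ?_ (Order.coheight_add_one_le hpq)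
      rw [ih q hpq]
      norm_cast
      lia

lemma ringKrullDim_quotient_eq (p : PrimeSpectrum A) :
    ringKrullDim (A ⧸ p.asIdeal) = ((n - extDeg p : ℕ) : WithBot ℕ∞) := by
  have h : PrimeSpectrum.zeroLocus (p.asIdeal : Set A) = Set.Ici p := by
    ext q; simp [PrimeSpectrum.mem_zeroLocus]
  rw [ringKrullDim_quotient, h, ← Order.coheight_eq_krullDim_Ici, coheight_eq H]
  rfl

end grade

/-! ### Purity and double Ext -/

section pure
open scoped Pointwise
variable {A : Type} [CommRing A] [IsNoetherianRing A] {n : ℕ} (H : ResidualExt A n)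
  {M : Type} [AddCommGroup M] [Module A M] {r : ℕ}
include H

/-- A module of codimension `r` is supported on primes of degree at least `r`. -/
lemma le_extDeg_of_ringKrullDim (hr : r ≤ n)
    (hcd : ringKrullDim (A ⧸ Module.annihilator A M) = ((n - r : ℕ) : WithBot ℕ∞))
    {p : PrimeSpectrum A} (hp : p ∈ Module.support A M) : r ≤ extDeg p := by
  have h := ringKrullDim_le_of_surjective
    (Ideal.Quotient.factor (Module.annihilator_le_of_mem_support hp))
    (Ideal.Quotient.factor_surjective _)
  rw [hcd, ringKrullDim_quotient_eq H] at h
  have := extDeg_le_n H p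
  norm_cast at h
  lia

/-- Purity only depends on the associated primes. -/
lemma pure_iff_associatedPrimes (hr : r ≤ n)
    (hcd : ringKrullDim (A ⧸ Module.annihilator A M) = ((n - r : ℕ) : WithBot ℕ∞)) :
    (∀ m : M, m ≠ 0 → ringKrullDim (A ⧸ (Submodule.span A {m}).annihilator)
        = ((n - r : ℕ) : WithBot ℕ∞)) ↔
      ∀ p : PrimeSpectrum A, p.asIdeal ∈ associatedPrimes A M → extDeg p = r := by
  constructor
  · intro h p hp
    obtain ⟨hp1, m, hm⟩ := isAssociatedPrime_iff.1 hp
    have hm' : p.asIdeal = (Submodule.span A {m}).annihilator := by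
      rw [hm, Submodule.bot_colon']
    have hm0 : m ≠ 0 := by
      rintro rfl
      exact hp1.ne_top (by rw [hm', Submodule.span_zero_singleton, Submodule.annihilator_bot])
    have h1 := h m hm0
    rw [← hm', ringKrullDim_quotient_eq H] at h1
    have := extDeg_le_n H p
    norm_cast at h1
    lia
  · intro h m hm
    apply le_antisymm
    · rw [← hcd]
      have hle : Module.annihilator A M ≤ (Submodule.span A {m}).annihilator := by
        rw [← Submodule.annihilator_top]
        exact Submodule.annihilator_mono le_top
      exact ringKrullDim_le_of_surjective (Ideal.Quotient.factor hle)
        (Ideal.Quotient.factor_surjective _)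
    · obtain ⟨P, hP, hle⟩ := exists_le_isAssociatedPrime_of_isNoetherianRing A m hm
      rw [Submodule.bot_colon'] at hle
      rw [← h ⟨P, hP.isPrime⟩ hP, ← ringKrullDim_quotient_eq H]
      exact ringKrullDim_le_of_surjective (Ideal.Quotient.factor hle)
        (Ideal.Quotient.factor_surjective _)

variable [Module.Finite A M]

/-- If all associated primes of `M` have degree `r` and no prime in the support of `M` has smaller
degree, a prime supporting `Ext^s(Ext^s(M, A), A)` with
`s ≠ r` would yield a prime `q` of degree `s > r` in the support of `Ext^s(M, A)`, and an `M`-regular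
`x ∈ q` would then put `q` into the support of `Ext^{s+1}(M/xM, A)`, in a degree above `extDeg q`. -/
lemma ext_ext_of_associatedPrimes
    (hr : ∀ p ∈ Module.support A M, r ≤ extDeg p)
    (h : ∀ p : PrimeSpectrum A, p.asIdeal ∈ associatedPrimes A M → extDeg p = r) {s : ℕ}
    (hs : s ≠ r) : Subsingleton (ExtA A (ExtA A M s) s) := by
  rw [← Module.support_eq_empty_iff (R := A), Set.eq_empty_iff_forall_notMem]
  intro p hp
  obtain ⟨q, hq, hqs⟩ := exists_extDeg_le_of_mem_support H hp
  have h1 := le_extDeg_of_mem_support H hq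
  obtain ⟨q', hq', hqs'⟩ := exists_extDeg_le_of_mem_support H hq
  have h2 := hr q' hq'
  -- `q` has degree `s > r`, so it lies in no associated prime and contains a regular element
  obtain ⟨x, hxq, hx⟩ : ∃ x ∈ q.asIdeal, IsSMulRegular M x := by
    by_contra! hc
    have hsub : (q.asIdeal : Set A) ⊆ ⋃ p ∈ associatedPrimes A M, ((id p : Ideal A) : Set A) := by
      simp only [id]
      rw [biUnion_associatedPrimes_eq_compl_regular]
      exact hc
    obtain ⟨P, hP, hle⟩ := (Ideal.subset_union_prime_finite (associatedPrimes.finite A M) 0 0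
      fun P hP _ _ ↦ hP.isPrime).1 hsub
    have h3 := h ⟨P, hP.isPrime⟩ hP
    have h4 := (extDeg_strictMono H).monotone (show q ≤ ⟨P, hP.isPrime⟩ from hle)
    lia
  have := le_extDeg_of_mem_support H (mem_support_ExtA_quotSMulTop M hx hxq hq)
  lia

/-- An associated prime `p` of `M` of degree `s` is again associated to `Ext^s(M, A)`, and therefore
supports `Ext^s(Ext^s(M, A), A)`. -/
lemma associatedPrimes_of_ext_ext
    (h : ∀ s ≤ n, s ≠ r → Subsingleton (ExtA A (ExtA A M s) s))
    (p : PrimeSpectrum A) (hp : p.asIdeal ∈ associatedPrimes A M) : extDeg p = r := by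
  by_contra hne
  have hsub := h _ (extDeg_le_n H p) hne
  have h1 := mem_support_of_isAssociatedPrime H hp
  -- `p` is a minimal prime of the support of `Ext^s(M, A)`, hence associated to it
  have h2 : p.asIdeal ∈ associatedPrimes A (ExtA A M (extDeg p)) := by
    refine Module.associatedPrimes.minimalPrimes_annihilator_subset_associatedPrimes A _
      ⟨⟨p.2, Module.annihilator_le_of_mem_support h1⟩, fun Q hQ hQp ↦ ?_⟩
    have h3 : (⟨Q, hQ.1⟩ : PrimeSpectrum A) ∈ Module.support A (ExtA A M (extDeg p)) := by
      rw [Module.support_eq_zeroLocus]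
      exact hQ.2
    have h4 := le_extDeg_of_mem_support H h3
    by_contra hlt
    have h5 : (⟨Q, hQ.1⟩ : PrimeSpectrum A) < p := lt_of_le_not_ge hQp hlt
    have := extDeg_strictMono H h5
    lia
  have h3 := mem_support_of_isAssociatedPrime H h2
  rw [Module.support_eq_empty_iff.2 hsub] at h3
  exact h3

lemma pure_iff_ExtA (hr : r ≤ n)
    (hcd : ringKrullDim (A ⧸ Module.annihilator A M) = ((n - r : ℕ) : WithBot ℕ∞)) :
    (∀ m : M, m ≠ 0 → ringKrullDim (A ⧸ (Submodule.span A {m}).annihilator)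
        = ((n - r : ℕ) : WithBot ℕ∞)) ↔
      ∀ s ≤ n, s ≠ r → Subsingleton (ExtA A (ExtA A M s) s) := by
  rw [pure_iff_associatedPrimes H hr hcd]
  exact ⟨fun h s _ hs ↦ ext_ext_of_associatedPrimes H
    (fun p hp ↦ le_extDeg_of_ringKrullDim H hr hcd hp) h hs, associatedPrimes_of_ext_ext H⟩

end pure

/-! ### Maximal ideals of polynomial rings -/

section regmax
open RingTheory.Sequence Polynomial

/-- Every maximal ideal of `R` is generated by a regular sequence of length `n`. -/
def MaximalIdealsRegular (R : Type) [CommRing R] (n : ℕ) : Prop :=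
  ∀ m : Ideal R, m.IsMaximal →
    ∃ rs : List R, rs.length = n ∧ Ideal.ofList rs = m ∧ IsWeaklyRegular R rs

lemma maximalIdealsRegular_of_field (k : Type) [Field k] : MaximalIdealsRegular k 0 := by
  intro m hm
  refine ⟨[], rfl, ?_, .nil _ _⟩
  rw [Ideal.ofList_nil, (Ideal.eq_bot_or_top m).resolve_right hm.ne_top]

lemma MaximalIdealsRegular.congr {R S : Type} [CommRing R] [CommRing S] {n : ℕ}
    (h : MaximalIdealsRegular R n) (e : R ≃+* S) : MaximalIdealsRegular S n := by
  intro m hm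
  obtain ⟨rs, h1, h2, h3⟩ := h (m.comap e) (Ideal.comap_isMaximal_of_equiv e)
  refine ⟨rs.map e, by simpa using h1, ?_, ?_⟩
  · have := congrArg (Ideal.map (e : R →+* S)) h2
    rw [Ideal.map_ofList] at this
    refine this.trans ?_
    exact Ideal.map_comap_of_surjective (e : R →+* S) e.surjective m
  · have := RingHomInvPair.of_ringEquiv e
    have := RingHomInvPair.of_ringEquiv e.symm
    exact (LinearEquiv.isWeaklyRegular_congr' e.toSemilinearEquiv rs).1 h3

/-- A maximal ideal `P` of `R[X]` lies over a maximal ideal `p` of the Jacobson ring `R`, and `P/pR[X]`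
is a nonzero principal ideal of the principal ideal domain `(R/p)[X]`. -/
lemma MaximalIdealsRegular.polynomial {R : Type} [CommRing R] [IsJacobsonRing R] {n : ℕ}
    (h : MaximalIdealsRegular R n) : MaximalIdealsRegular R[X] (n + 1) := by
  intro P hP
  have hp : (P.comap C).IsMaximal := Polynomial.isMaximal_comap_C_of_isJacobsonRing P
  obtain ⟨rs, h1, h2, h3⟩ := h _ hp
  set p := P.comap C with hpdef
  let _ : Field (R ⧸ p) := Ideal.Quotient.field p
  let φ : R[X] →+* (R ⧸ p)[X] := mapRingHom (Ideal.Quotient.mk p)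
  have hφ : Function.Surjective φ := map_surjective _ Ideal.Quotient.mk_surjective
  have hker : RingHom.ker φ = Ideal.ofList (rs.map C) := by
    rw [← Ideal.map_ofList, h2, Polynomial.ker_mapRingHom, Ideal.mk_ker]
  have hle : Ideal.ofList (rs.map C) ≤ P := by
    rw [← Ideal.map_ofList, h2, Ideal.map_le_iff_le_comap]
  obtain ⟨g, hg⟩ := (IsPrincipalIdealRing.principal (P.map φ)).principal
  obtain ⟨f, hf, rfl⟩ := (Ideal.mem_map_iff_of_surjective φ hφ).1
    (show g ∈ P.map φ by rw [hg]; exact Ideal.mem_span_singleton_self g)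
  have hf0 : φ f ≠ 0 := by
    intro h0
    have hz : ∀ y ∈ P, φ y = 0 := by
      intro y hy
      have := Ideal.mem_map_of_mem φ hy
      rw [hg, h0] at this
      simpa using this
    by_cases hX : X ∈ P
    · have := hz _ hX
      simp [φ] at this
    · obtain ⟨y, i, hi, hyi⟩ := hP.exists_inv hX
      have := congrArg (fun q ↦ (φ q).eval 0) hyi
      simp only [map_add, hz i hi] at this
      simp [φ] at this
  refine ⟨rs.map C ++ [f], by simp [h1], ?_, ?_⟩
  · rw [Ideal.ofList_append, Ideal.ofList_singleton]
    refine le_antisymm (sup_le hle (by simpa [Ideal.span_le] using hf)) fun y hy ↦ ?_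
    have := Ideal.mem_map_of_mem φ hy
    rw [hg] at this
    obtain ⟨c, hc⟩ := Ideal.mem_span_singleton'.1 this
    obtain ⟨c, rfl⟩ := hφ c
    rw [← sub_add_cancel y (c * f)]
    refine Ideal.add_mem _ (Ideal.mem_sup_left ?_) (Ideal.mem_sup_right ?_)
    · rw [← hker, RingHom.mem_ker, map_sub, map_mul, hc, sub_self]
    · exact Ideal.mul_mem_left _ _ (Ideal.mem_span_singleton_self f)
  · rw [isWeaklyRegular_append_iff]
    refine ⟨h3.of_flat (S := R[X]), (isWeaklyRegular_singleton_iff _ _).2 ?_⟩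
    rw [smul_eq_mul, Ideal.mul_top, ← hker, isSMulRegular_iff_right_eq_zero_of_smul]
    intro y hy
    obtain ⟨y, rfl⟩ := Submodule.Quotient.mk_surjective _ y
    rw [← Submodule.Quotient.mk_smul, Submodule.Quotient.mk_eq_zero, RingHom.mem_ker, smul_eq_mul,
      map_mul] at hy
    rw [Submodule.Quotient.mk_eq_zero]
    exact (mul_eq_zero.1 hy).resolve_left hf0

lemma maximalIdealsRegular_mvPolynomial (k : Type) [Field k] (n : ℕ) :
    MaximalIdealsRegular (MvPolynomial (Fin n) k) n := by
  induction n with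
  | zero => exact (maximalIdealsRegular_of_field k).congr (MvPolynomial.isEmptyRingEquiv k _).symm
  | succ n ih => exact ih.polynomial.congr (MvPolynomial.finSuccEquiv k n).symm.toRingEquiv

end regmax

section residual
open RingTheory.Sequence
open scoped Pointwise
variable {A : Type} [CommRing A]

lemma subsingleton_ExtA_quotSMulTop {N : Type} [AddCommGroup N] [Module A N] {x : A}
    (hx : IsSMulRegular N x) {i : ℕ} (h1 : Subsingleton (ExtA A N i))
    (h2 : Subsingleton (ExtA A N (i + 1))) : Subsingleton (ExtA A (QuotSMulTop x N) (i + 1)) := by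
  have hf : Function.Injective (x • LinearMap.id : N →ₗ[A] N) := hx
  have hfg : Function.Exact (x • LinearMap.id : N →ₗ[A] N)
      (Submodule.mkQ (x • (⊤ : Submodule A N))) := by
    rw [LinearMap.exact_iff, Submodule.ker_mkQ]
    ext y
    simp [Submodule.mem_smul_pointwise_iff_exists]
  obtain ⟨-, δ, -, h⟩ := ExtA.exists_exact hf (Submodule.mkQ_surjective _) hfg i
  refine subsingleton_of_forall_eq 0 fun y ↦ ?_
  obtain ⟨z, rfl⟩ := (h y).1 (Subsingleton.elim _ _)
  rw [Subsingleton.elim z 0, map_zero]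

/-- Each step of a regular sequence raises the top nonvanishing `Ext` degree by at most one. -/
lemma subsingleton_ExtA_of_isWeaklyRegular {rs : List A} (N : Type) [AddCommGroup N] [Module A N]
    (hrs : IsWeaklyRegular N rs) {j : ℕ} (hN : ∀ i > j, Subsingleton (ExtA A N i)) :
    ∀ i > j + rs.length, Subsingleton (ExtA A (N ⧸ (Ideal.ofList rs • ⊤ : Submodule A N)) i) := by
  induction rs generalizing N j with
  | nil =>
    intro i hi
    have := hN i hi
    let e : N ≃ₗ[A] (N ⧸ (Ideal.ofList ([] : List A) • ⊤ : Submodule A N)) :=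
      (Submodule.quotEquivOfEqBot _ (by simp)).symm
    exact (ExtA.congr e i).subsingleton
  | cons x rs ih =>
    intro i hi
    rw [isWeaklyRegular_cons_iff] at hrs
    have := ih (QuotSMulTop x N) hrs.2 (j := j + 1) (fun i hi ↦ by
      obtain ⟨i, rfl⟩ : ∃ i', i = i' + 1 := ⟨i - 1, by lia⟩
      exact subsingleton_ExtA_quotSMulTop hrs.1 (hN _ (by lia)) (hN _ (by lia))) i
      (by rw [List.length_cons] at hi; lia)
    exact (ExtA.congr (Submodule.quotOfListConsSMulTopEquivQuotSMulTopInner N x rs) i).symm.subsingleton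

/-- For `m` generated by a regular sequence of length `n`, depth gives vanishing of `Ext^i(A/m, A)`
for `i < n`, and the length of the sequence gives vanishing for `i > n`. -/
lemma residualExt_of_maximalIdealsRegular [IsNoetherianRing A] {n : ℕ}
    (h : MaximalIdealsRegular A n) : ResidualExt A n := by
  intro m hm i hi
  obtain ⟨rs, h1, rfl, h3⟩ := h m hm
  rcases lt_or_gt_of_ne hi with hlt | hgt
  · have hne : (Ideal.ofList rs • ⊤ : Ideal A) ≠ ⊤ := by
      rw [smul_eq_mul, Ideal.mul_top]; exact hm.ne_top
    refine ModuleCat.subsingleton_ext_of_exists_isRegular (Ideal.ofList rs)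
      (ModuleCat.of A (A ⧸ Ideal.ofList rs)) ?_ (ModuleCat.of A A) hne.lt_top rs
      (fun r hr ↦ Ideal.subset_span hr) ⟨h3, hne.symm⟩ i (h1 ▸ hlt)
    rw [Module.support_eq_zeroLocus]
    exact (PrimeSpectrum.zeroLocus_anti_mono (by rw [Ideal.annihilator_quotient]))
  · have := subsingleton_ExtA_of_isWeaklyRegular A h3 (j := 0) (fun i hi ↦ by
      obtain ⟨i, rfl⟩ : ∃ i', i = i' + 1 := ⟨i - 1, by lia⟩
      refine subsingleton_of_forall_eq 0 fun y ↦ ?_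
      exact Abelian.Ext.eq_zero_of_projective y) i (by lia)
    rwa [smul_eq_mul, Ideal.mul_top] at this
end residual

/-- For `A = k[x_1, …, x_n]` with `k` a field and `n ≥ 1`, and `M` a nonzero finitely generated
`A`-module with `cd(M) = r` (i.e. `dim (A / ann_A M) = n - r`, `r ≤ n`): `M` is `r`-pure if and
only if `Ext^s_A(Ext^s_A(M, A), A) = 0` for every `0 ≤ s ≤ n` with `s ≠ r`. -/
theorem pure_iff_ext_ext_eq_zero (k : Type) [Field k] (n : ℕ) (hn : 1 ≤ n)
    (M : Type) [AddCommGroup M] [Module (MvPolynomial (Fin n) k) M]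
    [Module.Finite (MvPolynomial (Fin n) k) M] [Nontrivial M]
    (r : ℕ) (hr : r ≤ n)
    (hcd : ringKrullDim (MvPolynomial (Fin n) k ⧸
        Module.annihilator (MvPolynomial (Fin n) k) M) = ((n - r : ℕ) : WithBot (WithTop ℕ))) :
    IsPureMod k n r M ↔
      ∀ s : ℕ, s ≤ n → s ≠ r →
        Subsingleton (extModule (MvPolynomial (Fin n) k)
          (extModule (MvPolynomial (Fin n) k) M s) s) := by
  have H := residualExt_of_maximalIdealsRegular (maximalIdealsRegular_mvPolynomial k n)
  refine (pure_iff_ExtA H hr hcd).trans (forall_congr' fun s ↦ forall_congr' fun _ ↦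
    forall_congr' fun _ ↦ ?_)
  exact ((extModuleEquiv _ _ s).trans
    (ExtA.congr (extModuleEquiv (MvPolynomial (Fin n) k) M s).symm s)).toEquiv.subsingleton_congr.symm
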